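/- Let T be a ℂ-linear triangulated category of finite type with split-generator G, and F a triangulated endofunctor of T with FⁿG ≇ 0 for all n ≥ 0. Then for every integer m ≥ 1 and every t ∈ ℝ, h_t(F^m) = m · h_t(F). -/

import Mathlib

/-!
The entropy is a growth rate `limsup (1/n) log a n` with `a n = δ_t(G, Fⁿ G)`. If `a (n + 1)` is
at most a constant times `a n`, then `a` is controlled by its values at multiples of `m`, and the
growth rate of `n ↦ a (m n)` is `m` times that of `a` (`limsup_log_mul`). The constant comes from
the usual argument (`exists_complexity_map_le`): apply `F` to a tower building `Fⁿ G` from shifts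
of `G`, then replace each shift of `F G` in it by a tower building `F G` from shifts of `G`.

Replacing the blocks of a tower by towers (`Built.subst`) requires that extensions be associative,
which is normally a consequence of the octahedral axiom, whereas the category is only assumed to be
pretriangulated. Since only the isomorphism classes of the objects in a tower matter, it suffices
to have the octahedral axiom on objects: for `f : X ⟶ Y`, and `K ⟶ Y` a fibre of `g : Y ⟶ Z`, the
cone of `K ⟶ Y ⟶ cone f` is isomorphic to the cone of `f ≫ g`. This follows from finiteness of type
(`exists_octahedral_triangle`):

* the long exact sequences show that the two objects receive morphism spaces of the same dimension
  from every object;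
* two objects `M`, `N` with `dim Hom(W, M) = dim Hom(W, N)` for all `W` are isomorphic
  (`nonempty_iso_of_finrank_eq`). Looking at cones and descending along shifts, where the morphism
  spaces eventually vanish, every `φ` has the same precomposition rank on `Hom(-, M)` and
  `Hom(-, N)` (`preRank_eq_of_finrank_eq`). This forces the identity of `M` (or of the part of `M`
  not yet matched with `N`) to factor through a finite sum of copies of `N`, so a trace argument and
  Fitting's lemma split off common summands one after the other (`exists_enlarge`,
  `nonempty_iso_of_preRank_eq`).
-/

open CategoryTheory Limits Pretriangulated Filter
open scoped ENNReal

universe u v u₂ v₂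

namespace CatEntropy

section Defs

variable (C : Type u) [Category.{v} C] [Preadditive C] [HasZeroObject C]
  [HasShift C ℤ] [∀ n : ℤ, (shiftFunctor C n).Additive] [Pretriangulated C]

/-- `C` is of finite type: for all objects `M, N`, the total dimension
`Σ_{n ∈ ℤ} dim_ℂ Hom(M, N⟦n⟧)` is finite. -/
def IsFiniteType [Linear ℂ C] : Prop :=
  ∀ M N : C, {n : ℤ | ¬ Subsingleton (M ⟶ N⟦n⟧)}.Finite ∧
    ∀ n : ℤ, FiniteDimensional ℂ (M ⟶ N⟦n⟧)

/-- A set of objects is a thick triangulated subcategory: closed under isomorphisms,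
shifts, cones and direct summands. -/
structure IsThick (S : Set C) : Prop where
  mem_of_iso : ∀ {X Y : C}, (X ≅ Y) → X ∈ S → Y ∈ S
  shift_mem : ∀ (X : C) (n : ℤ), X ∈ S → X⟦n⟧ ∈ S
  cone_mem : ∀ (T : Triangle C), T ∈ (distTriang C) → T.obj₁ ∈ S → T.obj₂ ∈ S → T.obj₃ ∈ S
  summand_mem : ∀ (X Y : C), (X ⊞ Y) ∈ S → X ∈ S

/-- `⟨M⟩`, the smallest thick triangulated subcategory containing `M`. -/
def thickClosure (M : C) : Set C :=
  ⋂₀ {S : Set C | IsThick C S ∧ M ∈ S}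

/-- `G` is a split-generator of `C` if `⟨G⟩ = C`. -/
def IsSplitGenerator (G : C) : Prop := ∀ X : C, X ∈ thickClosure C G

open Classical in
/-- The complexity `δ_{C,t}(M, N)` of `N` with respect to `M`. -/
noncomputable def complexity (t : ℝ) (M N : C) : ℝ≥0∞ :=
  if IsZero N then 0
  else if N ∈ thickClosure C M then
    sInf {c : ℝ≥0∞ |
      ∃ (p : ℕ) (_ : 0 < p) (n : Fin p → ℤ) (A : Fin (p + 1) → C) (N' : C),
        IsZero (A 0) ∧ Nonempty (A (Fin.last p) ≅ N ⊞ N') ∧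
        (∀ i : Fin p,
          ∃ (f : A i.castSucc ⟶ A i.succ) (g : A i.succ ⟶ M⟦n i⟧)
            (h : M⟦n i⟧ ⟶ (A i.castSucc)⟦(1 : ℤ)⟧),
              Triangle.mk f g h ∈ (distTriang C)) ∧
        c = ∑ i : Fin p, ENNReal.ofReal (Real.exp ((n i : ℝ) * t))}
  else ⊤

/-- Iterated composition `Fⁿ` of an endofunctor. -/
def iter (F : C ⥤ C) : ℕ → C ⥤ C
  | 0 => 𝟭 C
  | n + 1 => iter F n ⋙ F

/-- The entropy `h_t(F)` of an endofunctor `F`, computed with the split-generator `G`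
(the defining limit exists and agrees with the `limsup` used here). -/
noncomputable def entropy (F : C ⥤ C) (G : C) (t : ℝ) : EReal :=
  Filter.atTop.limsup fun m : ℕ =>
    (((m : ℝ)⁻¹ : ℝ) : EReal) * (complexity C t G ((iter C F m).obj G)).log

end Defs

/-! ### Linear algebra -/

/-- A non-nilpotent element `a` of a finite-dimensional algebra has a nonzero idempotent among its
multiples `c * a` with `c` commuting with `a` (Fitting's lemma): split off the power of `X` from
the minimal polynomial of `a` and use a Bézout relation. -/
lemma exists_idempotent_of_not_isNilpotent {A : Type*} [Ring A] [Algebra ℂ A]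
    [FiniteDimensional ℂ A] (a : A) (ha : ¬ IsNilpotent a) :
    ∃ c : A, c * a = a * c ∧ c * a * (c * a) = c * a ∧ c * a ≠ 0 := by
  have hint : IsIntegral ℂ a := Algebra.IsIntegral.isIntegral a
  have hp0 := minpoly.ne_zero hint
  obtain ⟨q, hq, hdvd⟩ :=
    (minpoly ℂ a).exists_eq_pow_rootMultiplicity_mul_and_not_dvd hp0 0
  set n := (minpoly ℂ a).rootMultiplicity 0
  simp only [map_zero, sub_zero] at hq hdvd
  have hcop : IsCoprime (Polynomial.X ^ (n + 1) : Polynomial ℂ) q :=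
    (((Polynomial.prime_X (R := ℂ)).coprime_iff_not_dvd).2 hdvd).pow_left
  obtain ⟨u, v, huv⟩ := hcop
  have hz : a ^ n * Polynomial.aeval a q = 0 := by
    have := minpoly.aeval ℂ a
    rw [hq] at this
    simpa using this
  have key : (u * Polynomial.X ^ n) * Polynomial.X = 1 - v * q := by
    rw [← huv]; ring
  have hca : Polynomial.aeval a (u * Polynomial.X ^ n) * a =
      1 - Polynomial.aeval a v * Polynomial.aeval a q := by
    have := congrArg (Polynomial.aeval a) key
    simpa using this
  have hcomm : Polynomial.aeval a (u * Polynomial.X ^ n) * a =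
      a * Polynomial.aeval a (u * Polynomial.X ^ n) := by
    have := congrArg (Polynomial.aeval a) (mul_comm (u * Polynomial.X ^ n) Polynomial.X)
    rwa [map_mul _ (u * Polynomial.X ^ n), map_mul _ Polynomial.X (u * Polynomial.X ^ n),
      Polynomial.aeval_X] at this
  refine ⟨_, hcomm, ?_, ?_⟩
  · have h0 : (u * Polynomial.X ^ n * Polynomial.X) * (v * q) =
        (u * v * Polynomial.X) * (Polynomial.X ^ n * q) := by ring
    have h1 := congrArg (Polynomial.aeval a) h0
    rw [map_mul, map_mul, map_mul _ _ (Polynomial.X ^ n * q), map_mul _ (Polynomial.X ^ n) q,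
      map_pow, Polynomial.aeval_X, hz, mul_zero, map_mul _ v q] at h1
    conv_lhs => rw [hca, mul_sub, mul_one, ← hca, h1, sub_zero]
  · intro h0
    apply ha
    refine ⟨n, ?_⟩
    have h2 : Polynomial.aeval a v * Polynomial.aeval a q = 1 := by
      rw [hca, sub_eq_zero] at h0
      exact h0.symm
    have h3 : a ^ n * (Polynomial.aeval a v * Polynomial.aeval a q) =
        Polynomial.aeval a v * (a ^ n * Polynomial.aeval a q) := by
      have := congrArg (Polynomial.aeval a)
        (show Polynomial.X ^ n * (v * q) = v * (Polynomial.X ^ n * q) by ring)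
      simpa using this
    rw [h2, hz, mul_one, mul_zero] at h3
    exact h3

lemma finrank_range_le_of_comp {U V : Type*} [AddCommGroup U] [Module ℂ U]
    [AddCommGroup V] [Module ℂ V] [FiniteDimensional ℂ U] [FiniteDimensional ℂ V]
    (p : U →ₗ[ℂ] V) (q : V →ₗ[ℂ] U) (hpq : ∀ x, p (q (p x)) = p x) :
    Module.finrank ℂ (LinearMap.range p) ≤ Module.finrank ℂ (LinearMap.range q) := by
  have : LinearMap.range p ≤ (LinearMap.range q).map p := by
    rintro _ ⟨x, rfl⟩
    exact ⟨q (p x), ⟨_, rfl⟩, hpq x⟩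
  exact (Submodule.finrank_mono this).trans (Submodule.finrank_map_le _ _)

/-- Linear maps that are inverse to each other on their images have kernels of the same dimension,
provided the two spaces do. -/
lemma finrank_ker_eq_of_mutually_inverse {U V : Type*} [AddCommGroup U] [Module ℂ U]
    [AddCommGroup V] [Module ℂ V] [FiniteDimensional ℂ U] [FiniteDimensional ℂ V]
    (p : U →ₗ[ℂ] V) (q : V →ₗ[ℂ] U) (hpq : ∀ x, p (q (p x)) = p x)
    (hqp : ∀ x, q (p (q x)) = q x) (h : Module.finrank ℂ U = Module.finrank ℂ V) :
    Module.finrank ℂ (LinearMap.ker p) = Module.finrank ℂ (LinearMap.ker q) := by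
  have h1 := finrank_range_le_of_comp p q hpq
  have h2 := finrank_range_le_of_comp q p hqp
  have h3 := p.finrank_range_add_finrank_ker
  have h4 := q.finrank_range_add_finrank_ker
  omega

/-! ### Objects with equal precomposition ranks are isomorphic -/

section HomFinite

variable {C : Type u} [Category.{v} C] [Preadditive C] [Linear ℂ C]

/-- The rank of precomposition with `φ` on `Hom(-, M)`. -/
noncomputable def preRank {A B : C} (φ : A ⟶ B) (M : C) : ℕ :=
  Module.finrank ℂ (LinearMap.range (Linear.leftComp ℂ M φ))

/-- Given partial inverses `f : M ⟶ N`, `g : N ⟶ M`, the equality of the ranks of `φ` on `M` and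
`N` passes to the complements of the split-off common summand. -/
lemma finrank_inf_ker_eq (hfin : ∀ X Y : C, FiniteDimensional ℂ (X ⟶ Y)) {M N : C}
    (f : M ⟶ N) (g : N ⟶ M) (hfg : f ≫ g ≫ f = f) (hgf : g ≫ f ≫ g = g)
    {A B : C} (φ : A ⟶ B) (hr : preRank φ M = preRank φ N) :
    Module.finrank ℂ ↥(LinearMap.range (Linear.leftComp ℂ M φ) ⊓
        LinearMap.ker (Linear.rightComp ℂ A f)) =
      Module.finrank ℂ ↥(LinearMap.range (Linear.leftComp ℂ N φ) ⊓
        LinearMap.ker (Linear.rightComp ℂ A g)) := by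
  have aux : ∀ {M N : C} (f : M ⟶ N), ∀ x ∈ LinearMap.range (Linear.leftComp ℂ M φ),
      Linear.rightComp ℂ A f x ∈ LinearMap.range (Linear.leftComp ℂ N φ) := by
    rintro M N f _ ⟨y, rfl⟩
    exact ⟨y ≫ f, by simp⟩
  have key := finrank_ker_eq_of_mutually_inverse
    ((Linear.rightComp ℂ A f).restrict (aux f)) ((Linear.rightComp ℂ A g).restrict (aux g))
    (by rintro ⟨x, hx⟩; ext; simp [LinearMap.restrict_apply, hfg])
    (by rintro ⟨x, hx⟩; ext; simp [LinearMap.restrict_apply, hgf]) hr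
  have aux2 : ∀ {M N : C} (f : M ⟶ N),
      Module.finrank ℂ (LinearMap.ker ((Linear.rightComp ℂ A f).restrict (aux f))) =
      Module.finrank ℂ ↥(LinearMap.range (Linear.leftComp ℂ M φ) ⊓
        LinearMap.ker (Linear.rightComp ℂ A f)) := by
    intro M N f
    rw [LinearMap.ker_restrict, ← Submodule.map_comap_subtype, Submodule.finrank_map_subtype_eq]
  rw [← aux2 f, ← aux2 g, key]

/-- If `c` turns a composition `β ≫ γ` through the complements of the common summand into a nonzero
idempotent, then the image of this idempotent can be added to the common summand. -/
lemma exists_enlarge_of_idempotent (hfin : ∀ X Y : C, FiniteDimensional ℂ (X ⟶ Y)) {M N : C}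
    (f : M ⟶ N) (g : N ⟶ M) (hfg : f ≫ g ≫ f = f) (hgf : g ≫ f ≫ g = g)
    (β : M ⟶ N) (γ : N ⟶ M) (hβg : β ≫ g = 0) (hgβ : g ≫ β = 0) (hfγ : f ≫ γ = 0)
    (hγf : γ ≫ f = 0) (c : M ⟶ M) (hc1 : β ≫ γ ≫ c = c ≫ β ≫ γ)
    (hc2 : β ≫ γ ≫ c ≫ β ≫ γ ≫ c = β ≫ γ ≫ c) (hc3 : β ≫ γ ≫ c ≠ 0) :
    ∃ (f' : M ⟶ N) (g' : N ⟶ M), f' ≫ g' ≫ f' = f' ∧ g' ≫ f' ≫ g' = g' ∧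
      Module.finrank ℂ (LinearMap.range (Linear.rightComp ℂ M (f ≫ g))) <
        Module.finrank ℂ (LinearMap.range (Linear.rightComp ℂ M (f' ≫ g'))) := by
  obtain ⟨e, he⟩ : ∃ e, e = β ≫ γ ≫ c := ⟨_, rfl⟩
  have hee : e ≫ e = e := by rw [he]; simpa using hc2
  have hge : g ≫ e = 0 := by rw [he, reassoc_of% hgβ, zero_comp]
  have hef : e ≫ f = 0 := by rw [he, hc1]; simp [hγf]
  have he0 : e ≠ 0 := by rwa [he]
  rw [← he] at hc1
  -- the new pair is `(f + e ≫ β, g + γ ≫ c ≫ e)`, with composition `f ≫ g + e`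
  have hfg1 : (e ≫ β) ≫ (γ ≫ c ≫ e) = e := by
    have : β ≫ γ ≫ c ≫ e = e := by
      rw [← Category.assoc γ c e, ← Category.assoc β, ← he, hee]
    simp only [Category.assoc, this, hee]
  have hcomp : (f + e ≫ β) ≫ (g + γ ≫ c ≫ e) = f ≫ g + e := by
    rw [Preadditive.comp_add, Preadditive.add_comp, Preadditive.add_comp, hfg1]
    simp [hβg, reassoc_of% hfγ]
  refine ⟨f + e ≫ β, g + γ ≫ c ≫ e, ?_, ?_, ?_⟩
  · rw [← Category.assoc, hcomp]
    simp only [Preadditive.comp_add, Preadditive.add_comp, Category.assoc, hfg, hef,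
      reassoc_of% hge, reassoc_of% hee, comp_zero, zero_comp]
    abel
  · rw [hcomp]
    simp only [Preadditive.comp_add, Preadditive.add_comp, Category.assoc, hgf, hge,
      reassoc_of% hef, hee, comp_zero, zero_comp]
    abel
  · rw [hcomp]
    apply Submodule.finrank_lt_finrank_of_lt
    refine lt_of_le_of_ne ?_ ?_
    · rintro _ ⟨x, rfl⟩
      refine ⟨x ≫ f ≫ g, ?_⟩
      simp [hgf, hge]
    · intro h
      have : e ∈ LinearMap.range (Linear.rightComp ℂ M (f ≫ g)) := by
        rw [h]
        exact ⟨e, by simp [hee, reassoc_of% hef]⟩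
      obtain ⟨x, hx⟩ := this
      simp only [Linear.rightComp_apply] at hx
      apply he0
      calc e = (x ≫ f ≫ g) ≫ e := by rw [hx, hee]
        _ = 0 := by simp [hge]

/-- One step in the construction of an isomorphism `M ≅ N`: a pair of partial inverses
`f : M ⟶ N`, `g : N ⟶ M` with `f ≫ g ≠ 𝟙 M` can be enlarged. The complementary idempotent
`𝟙 - f ≫ g` is a sum of endomorphisms factoring through the complement in `N`; as its trace is
nonzero, one of these endomorphisms is not nilpotent, and Fitting's lemma splits off a further
common summand. -/
lemma exists_enlarge [HasFiniteBiproducts C] (hfin : ∀ X Y : C, FiniteDimensional ℂ (X ⟶ Y))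
    {M N : C} (hr : ∀ {A B : C} (φ : A ⟶ B), preRank φ M = preRank φ N)
    (f : M ⟶ N) (g : N ⟶ M) (hfg : f ≫ g ≫ f = f) (hgf : g ≫ f ≫ g = g) (hne : f ≫ g ≠ 𝟙 M) :
    ∃ (f' : M ⟶ N) (g' : N ⟶ M), f' ≫ g' ≫ f' = f' ∧ g' ≫ f' ≫ g' = g' ∧
      Module.finrank ℂ (LinearMap.range (Linear.rightComp ℂ M (f ≫ g))) <
        Module.finrank ℂ (LinearMap.range (Linear.rightComp ℂ M (f' ≫ g'))) := by
  -- `KM` and `KN` consist of the morphisms from the complement in `M` to itself, respectively to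
  -- the complement in `N`
  let KM := LinearMap.range (Linear.leftComp ℂ M (𝟙 M - f ≫ g)) ⊓
        LinearMap.ker (Linear.rightComp ℂ M f)
  let KN := LinearMap.range (Linear.leftComp ℂ N (𝟙 M - f ≫ g)) ⊓
        LinearMap.ker (Linear.rightComp ℂ M g)
  have hK : Module.finrank ℂ KM = Module.finrank ℂ KN :=
    finrank_inf_ker_eq hfin f g hfg hgf _ (hr _)
  have hKN : ∀ x ∈ KN, x ≫ g = 0 ∧ g ≫ x = 0 := by
    rintro _ ⟨⟨y, rfl⟩, hx⟩
    refine ⟨by simpa using hx, ?_⟩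
    simp [reassoc_of% hgf]
  have hmemN : ∀ x : M ⟶ N, x ≫ g = 0 → f ≫ g ≫ x = 0 → x ∈ KN := by
    intro x h1 h2
    exact ⟨⟨x, by simp [h2]⟩, by simpa using h1⟩
  have hmemM : ∀ x : M ⟶ M, x ≫ f = 0 → f ≫ g ≫ x = 0 → x ∈ KM := by
    intro x h1 h2
    exact ⟨⟨x, by simp [h2]⟩, by simpa using h1⟩
  let b := Module.finBasis ℂ KN
  let φ : M ⟶ ⨁ (fun _ : Fin (Module.finrank ℂ KN) => N) := biproduct.lift fun i => (b i : M ⟶ N)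
  have hφ0 : g ≫ φ = 0 := by
    apply biproduct.hom_ext
    intro i
    simp [φ, (hKN _ (b i).2).2]
  have hφ := finrank_inf_ker_eq hfin f g hfg hgf φ (hr _)
  have hleN : KN ≤ LinearMap.range (Linear.leftComp ℂ N φ) ⊓
        LinearMap.ker (Linear.rightComp ℂ M g) := by
    refine le_inf ?_ inf_le_right
    intro x hx
    have h1 := b.sum_repr ⟨x, hx⟩
    have h2 := congrArg (Subtype.val) h1
    simp only [AddSubmonoidClass.coe_finsetSum, Submodule.coe_smul] at h2
    refine ⟨∑ i, (b.repr ⟨x, hx⟩ i) • biproduct.π (fun _ => N) i, ?_⟩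
    refine Eq.trans ?_ h2
    simp [φ]
  have hleM : LinearMap.range (Linear.leftComp ℂ M φ) ⊓
        LinearMap.ker (Linear.rightComp ℂ M f) ≤ KM := by
    rintro _ ⟨⟨y, rfl⟩, hx⟩
    exact hmemM _ (by simpa using hx) (by simp [reassoc_of% hφ0])
  have heq := Submodule.eq_of_le_of_finrank_le hleM
    (by rw [hφ, hK]; exact Submodule.finrank_mono hleN)
  have hmem : 𝟙 M - f ≫ g ∈ KM := by
    apply hmemM
    · simp [hfg]
    · simp [hgf]
  rw [← heq] at hmem
  obtain ⟨⟨y, hy⟩, -⟩ := hmem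
  simp only [Linear.leftComp_apply] at hy
  let g₀ : Fin (Module.finrank ℂ KN) → (N ⟶ M) := fun i =>
    (𝟙 N - g ≫ f) ≫ (biproduct.ι (fun _ => N) i ≫ y) ≫ (𝟙 M - f ≫ g)
  have hfg₀ : ∀ i, f ≫ g₀ i = 0 := fun i => by
    simp only [g₀, Preadditive.comp_sub, Preadditive.sub_comp, Category.id_comp, Category.comp_id,
      Category.assoc, reassoc_of% hfg]; abel
  have hg₀f : ∀ i, g₀ i ≫ f = 0 := fun i => by
    simp only [g₀, Preadditive.comp_sub, Preadditive.sub_comp, Category.id_comp, Category.comp_id,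
      Category.assoc, hfg]; abel
  have hsum : 𝟙 M - f ≫ g = ∑ i, (b i : M ⟶ N) ≫ g₀ i := by
    have h1 : ∀ i, (b i : M ⟶ N) ≫ g₀ i =
        ((b i : M ⟶ N) ≫ biproduct.ι (fun _ => N) i ≫ y) ≫ (𝟙 M - f ≫ g) := by
      intro i
      have := (hKN _ (b i).2).1
      simp [g₀, reassoc_of% this]
    have h2 : φ = ∑ i, (b i : M ⟶ N) ≫ biproduct.ι (fun _ => N) i := by
      simp only [φ, biproduct.lift_eq]
    rw [Finset.sum_congr rfl fun i _ => h1 i, ← Preadditive.sum_comp]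
    simp_rw [← Category.assoc]
    rw [← Preadditive.sum_comp, ← h2, hy]
    simp [hgf]
  obtain ⟨i, hi⟩ : ∃ i, ¬ IsNilpotent (End.of ((b i : M ⟶ N) ≫ g₀ i)) := by
    by_contra! hall
    have hproj : IsIdempotentElem (Linear.rightComp ℂ M (𝟙 M - f ≫ g) : Module.End ℂ (M ⟶ M)) := by
      ext x
      simp [hgf]
    have htr : LinearMap.trace ℂ (M ⟶ M) (Linear.rightComp ℂ M (𝟙 M - f ≫ g)) = 0 := by
      have : (Linear.rightComp ℂ M (𝟙 M - f ≫ g)) =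
          ∑ i, Linear.rightComp ℂ M ((b i : M ⟶ N) ≫ g₀ i) := by
        ext x
        rw [hsum]
        simp [Preadditive.comp_sum]
      rw [this, map_sum]
      refine Finset.sum_eq_zero fun i _ => ?_
      refine (LinearMap.isNilpotent_trace_of_isNilpotent ?_).eq_zero
      obtain ⟨n, hn⟩ := hall i
      refine ⟨n, ?_⟩
      have hpow : ∀ (a : End M) (n : ℕ) (x : M ⟶ M),
          ((Linear.rightComp ℂ M a : Module.End ℂ (M ⟶ M)) ^ n) x = x ≫ (a ^ n : End M) := by
        intro a n
        induction n with
        | zero => intro x; simp [End.one_def]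
        | succ n ih => intro x; rw [pow_succ', pow_succ', End.mul_def]; simp [ih]
      ext x
      have := hpow (End.of ((b i : M ⟶ N) ≫ g₀ i)) n x
      rw [hn] at this
      simpa using this
    have h0 := LinearMap.IsIdempotentElem.eq_zero_of_trace_eq_zero hproj htr
    have h1 := LinearMap.congr_fun h0 (𝟙 M)
    simp only [Linear.rightComp_apply, Category.id_comp, LinearMap.zero_apply] at h1
    exact hne (sub_eq_zero.1 h1).symm
  have : FiniteDimensional ℂ (End M) := hfin M M
  obtain ⟨c, hc1, hc2, hc3⟩ := exists_idempotent_of_not_isNilpotent _ hi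
  obtain ⟨hb1, hb2⟩ := hKN _ (b i).2
  simp only [End.mul_def, Category.assoc] at hc1 hc2 hc3
  exact exists_enlarge_of_idempotent hfin f g hfg hgf (b i : M ⟶ N) (g₀ i) hb1 hb2 (hfg₀ i)
    (hg₀f i) c hc1 hc2 hc3

/-- Objects with the same precomposition ranks are isomorphic: enlarge a common summand until it
is all of `M`, and compare dimensions. -/
lemma nonempty_iso_of_preRank_eq [HasFiniteBiproducts C]
    (hfin : ∀ X Y : C, FiniteDimensional ℂ (X ⟶ Y))
    {M N : C} (hr : ∀ {A B : C} (φ : A ⟶ B), preRank φ M = preRank φ N) : Nonempty (M ≅ N) := by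
  have key : ∀ (k : ℕ) (f : M ⟶ N) (g : N ⟶ M), f ≫ g ≫ f = f → g ≫ f ≫ g = g →
      Module.finrank ℂ (M ⟶ M) ≤
        Module.finrank ℂ (LinearMap.range (Linear.rightComp ℂ M (f ≫ g))) + k →
      ∃ (f : M ⟶ N) (g : N ⟶ M), f ≫ g = 𝟙 M := by
    intro k
    induction k with
    | zero =>
      intro f g hfg hgf hk
      by_contra! hall
      obtain ⟨f', g', -, -, hlt⟩ := exists_enlarge hfin hr f g hfg hgf (hall f g)
      have := Submodule.finrank_le (LinearMap.range (Linear.rightComp ℂ M (f' ≫ g')))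
      omega
    | succ k ih =>
      intro f g hfg hgf hk
      by_cases h1 : f ≫ g = 𝟙 M
      · exact ⟨f, g, h1⟩
      obtain ⟨f', g', h2, h3, hlt⟩ := exists_enlarge hfin hr f g hfg hgf h1
      exact ih f' g' h2 h3 (by omega)
  obtain ⟨f, g, hfg⟩ := key (Module.finrank ℂ (M ⟶ M)) 0 0 (by simp) (by simp) (by simp)
  -- `f` is a split monomorphism; a dimension count shows that it is also a split epimorphism
  have hdim : Module.finrank ℂ (N ⟶ M) = Module.finrank ℂ (N ⟶ N) := by
    have h1 := hr (𝟙 N)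
    have h2 : ∀ Z : C, LinearMap.range (Linear.leftComp ℂ Z (𝟙 N)) = ⊤ := fun Z =>
      LinearMap.range_eq_top.2 fun x => ⟨x, by simp⟩
    rw [preRank, preRank, h2, h2, finrank_top, finrank_top] at h1
    exact h1
  have hinj : Function.Injective (Linear.rightComp ℂ N f) := by
    intro x y hxy
    have := congrArg (· ≫ g) hxy
    simpa [hfg] using this
  obtain ⟨x, hx⟩ := (LinearMap.injective_iff_surjective_of_finrank_eq_finrank hdim).1 hinj (𝟙 N)
  simp only [Linear.rightComp_apply] at hx
  have hxg : x = g := by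
    have := congrArg (· ≫ g) hx
    simpa [hfg] using this
  exact ⟨⟨f, g, hfg, hxg ▸ hx⟩⟩

end HomFinite

/-! ### An object-level octahedral axiom -/

lemma finrank_map_add_finrank_inf_ker {U V : Type*} [AddCommGroup U] [Module ℂ U]
    [AddCommGroup V] [Module ℂ V] [FiniteDimensional ℂ U] (q : U →ₗ[ℂ] V) (S : Submodule ℂ U) :
    Module.finrank ℂ (S.map q) + Module.finrank ℂ ↥(S ⊓ LinearMap.ker q) = Module.finrank ℂ S := by
  have := (q.domRestrict S).finrank_range_add_finrank_ker
  rw [LinearMap.range_domRestrict, LinearMap.ker_domRestrict] at this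
  rwa [← Submodule.map_comap_subtype, Submodule.finrank_map_subtype_eq]

/-- For sequences `f, p` and `k, g` exact at the same space, the ranks of `p ∘ k` and `g ∘ f`
determine each other. -/
lemma finrank_range_comp_add {H₁ H₂ H₃ H₄ H₅ : Type*} [AddCommGroup H₁] [Module ℂ H₁]
    [AddCommGroup H₂] [Module ℂ H₂] [AddCommGroup H₃] [Module ℂ H₃] [AddCommGroup H₄] [Module ℂ H₄]
    [AddCommGroup H₅] [Module ℂ H₅] [FiniteDimensional ℂ H₁] [FiniteDimensional ℂ H₂]
    [FiniteDimensional ℂ H₃] [FiniteDimensional ℂ H₄] [FiniteDimensional ℂ H₅]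
    (f : H₁ →ₗ[ℂ] H₂) (p : H₂ →ₗ[ℂ] H₃) (k : H₄ →ₗ[ℂ] H₂) (g : H₂ →ₗ[ℂ] H₅)
    (hfp : LinearMap.range f = LinearMap.ker p) (hkg : LinearMap.range k = LinearMap.ker g) :
    Module.finrank ℂ (LinearMap.range (p ∘ₗ k)) + Module.finrank ℂ (LinearMap.range g) +
      Module.finrank ℂ (LinearMap.range f) =
    Module.finrank ℂ H₂ + Module.finrank ℂ (LinearMap.range (g ∘ₗ f)) := by
  rw [LinearMap.range_comp, LinearMap.range_comp]
  have h1 := finrank_map_add_finrank_inf_ker p (LinearMap.range k)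
  have h2 := finrank_map_add_finrank_inf_ker g (LinearMap.range f)
  have h3 := g.finrank_range_add_finrank_ker
  rw [← hfp] at h1
  rw [← hkg, inf_comm] at h2
  rw [← hkg] at h3
  omega

section Neg

variable {C : Type u} [Category.{v} C] [Preadditive C] [Linear ℂ C]

lemma rightComp_neg (W : C) {A B : C} (φ : A ⟶ B) :
    Linear.rightComp ℂ W (-φ) = -Linear.rightComp ℂ W φ := by
  ext x
  exact Preadditive.comp_neg _ _

lemma leftComp_neg (M : C) {A B : C} (φ : A ⟶ B) :
    Linear.leftComp ℂ M (-φ) = -Linear.leftComp ℂ M φ := by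
  ext x
  exact Preadditive.neg_comp _ _

end Neg

section Triangulated

variable {C : Type u} [Category.{v} C] [Preadditive C] [HasZeroObject C]
  [HasShift C ℤ] [∀ n : ℤ, (shiftFunctor C n).Additive] [Pretriangulated C] [Linear ℂ C]

/-- The rank of postcomposition with `φ` on `Hom(W, -)`. -/
noncomputable def postRank (W : C) {A B : C} (φ : A ⟶ B) : ℕ :=
  Module.finrank ℂ (LinearMap.range (Linear.rightComp ℂ W φ))

lemma IsFiniteType.finiteDimensional (hft : IsFiniteType C) (X Y : C) :
    FiniteDimensional ℂ (X ⟶ Y) := by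
  have := (hft X Y).2 0
  exact LinearEquiv.finiteDimensional
    (Linear.homCongr ℂ (Iso.refl X) ((shiftFunctorZero C ℤ).app Y))

lemma range_rightComp_mor₁ (W : C) (T : Triangle C) (hT : T ∈ distTriang C) :
    LinearMap.range (Linear.rightComp ℂ W T.mor₁) =
      LinearMap.ker (Linear.rightComp ℂ W T.mor₂) := by
  ext x
  constructor
  · rintro ⟨y, rfl⟩
    simp [comp_distTriang_mor_zero₁₂ T hT]
  · intro hx
    obtain ⟨y, hy⟩ := T.coyoneda_exact₂ hT x hx
    exact ⟨y, hy.symm⟩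

lemma range_rightComp_mor₂ (W : C) (T : Triangle C) (hT : T ∈ distTriang C) :
    LinearMap.range (Linear.rightComp ℂ W T.mor₂) =
      LinearMap.ker (Linear.rightComp ℂ W T.mor₃) :=
  range_rightComp_mor₁ W T.rotate (rot_of_distTriang T hT)

lemma range_rightComp_mor₃ (W : C) (T : Triangle C) (hT : T ∈ distTriang C) :
    LinearMap.range (Linear.rightComp ℂ W T.mor₃) =
      LinearMap.ker (Linear.rightComp ℂ W (T.mor₁⟦(1 : ℤ)⟧')) := by
  have h := range_rightComp_mor₂ W T.rotate (rot_of_distTriang T hT)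
  have h2 : LinearMap.range (Linear.rightComp ℂ W T.mor₃) =
    LinearMap.ker (Linear.rightComp ℂ W (-(T.mor₁⟦(1 : ℤ)⟧'))) := h
  rw [h2, rightComp_neg, LinearMap.ker_neg]

lemma range_rightComp_shift (W : C) (T : Triangle C) (hT : T ∈ distTriang C) :
    LinearMap.range (Linear.rightComp ℂ W (T.mor₁⟦(1 : ℤ)⟧')) =
      LinearMap.ker (Linear.rightComp ℂ W (T.mor₂⟦(1 : ℤ)⟧')) := by
  have h := range_rightComp_mor₃ W T.rotate (rot_of_distTriang T hT)
  have h2 : LinearMap.range (Linear.rightComp ℂ W (-(T.mor₁⟦(1 : ℤ)⟧'))) =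
      LinearMap.ker (Linear.rightComp ℂ W (T.mor₂⟦(1 : ℤ)⟧')) := h
  rwa [rightComp_neg, LinearMap.range_neg] at h2

/-- Dimension count in the long exact sequence of `Hom(W, -)`. -/
lemma finrank_obj₃_add (hft : IsFiniteType C) (W : C) (T : Triangle C) (hT : T ∈ distTriang C) :
    Module.finrank ℂ (W ⟶ T.obj₃) + postRank W T.mor₁ + postRank W (T.mor₁⟦(1 : ℤ)⟧') =
      Module.finrank ℂ (W ⟶ T.obj₂) + Module.finrank ℂ (W ⟶ T.obj₁⟦(1 : ℤ)⟧) := by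
  have := hft.finiteDimensional
  have h1 := (Linear.rightComp ℂ W T.mor₂).finrank_range_add_finrank_ker
  have h2 := (Linear.rightComp ℂ W T.mor₃).finrank_range_add_finrank_ker
  have h3 := (Linear.rightComp ℂ W (T.mor₁⟦(1 : ℤ)⟧')).finrank_range_add_finrank_ker
  rw [← range_rightComp_mor₁ W T hT] at h1
  rw [← range_rightComp_mor₂ W T hT] at h2
  rw [← range_rightComp_mor₃ W T hT] at h3
  unfold postRank
  omega

lemma range_leftComp_mor₂ (M : C) (T : Triangle C) (hT : T ∈ distTriang C) :
    LinearMap.range (Linear.leftComp ℂ M T.mor₂) =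
      LinearMap.ker (Linear.leftComp ℂ M T.mor₁) := by
  ext x
  constructor
  · rintro ⟨y, rfl⟩
    simp [reassoc_of% comp_distTriang_mor_zero₁₂ T hT]
  · intro hx
    obtain ⟨y, hy⟩ := T.yoneda_exact₂ hT x hx
    exact ⟨y, hy.symm⟩

lemma range_leftComp_mor₃ (M : C) (T : Triangle C) (hT : T ∈ distTriang C) :
    LinearMap.range (Linear.leftComp ℂ M T.mor₃) =
      LinearMap.ker (Linear.leftComp ℂ M T.mor₂) :=
  range_leftComp_mor₂ M T.rotate (rot_of_distTriang T hT)

lemma range_leftComp_shift (M : C) (T : Triangle C) (hT : T ∈ distTriang C) :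
    LinearMap.range (Linear.leftComp ℂ M (T.mor₁⟦(1 : ℤ)⟧')) =
      LinearMap.ker (Linear.leftComp ℂ M T.mor₃) := by
  have h := range_leftComp_mor₃ M T.rotate (rot_of_distTriang T hT)
  have h2 : LinearMap.range (Linear.leftComp ℂ M (-(T.mor₁⟦(1 : ℤ)⟧'))) =
      LinearMap.ker (Linear.leftComp ℂ M T.mor₃) := h
  rwa [leftComp_neg, LinearMap.range_neg] at h2

/-- Dimension count in the long exact sequence of `Hom(-, M)`. -/
lemma finrank_hom_obj₃_add (hft : IsFiniteType C) (M : C) (T : Triangle C)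
    (hT : T ∈ distTriang C) :
    Module.finrank ℂ (T.obj₃ ⟶ M) + preRank T.mor₁ M + preRank (T.mor₁⟦(1 : ℤ)⟧') M =
      Module.finrank ℂ (T.obj₂ ⟶ M) + Module.finrank ℂ (T.obj₁⟦(1 : ℤ)⟧ ⟶ M) := by
  have := hft.finiteDimensional
  have h1 := (Linear.leftComp ℂ M T.mor₁).finrank_range_add_finrank_ker
  have h2 := (Linear.leftComp ℂ M T.mor₂).finrank_range_add_finrank_ker
  have h3 := (Linear.leftComp ℂ M T.mor₃).finrank_range_add_finrank_ker
  rw [← range_leftComp_mor₂ M T hT] at h1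
  rw [← range_leftComp_mor₃ M T hT] at h2
  rw [← range_leftComp_shift M T hT] at h3
  unfold preRank
  omega

lemma IsFiniteType.exists_subsingleton (hft : IsFiniteType C) (B M : C) :
    ∃ k : ℕ, ∀ n : ℕ, k ≤ n → Subsingleton (B⟦(n : ℤ)⟧ ⟶ M) := by
  obtain ⟨l, hl⟩ := (hft B M).1.bddBelow
  refine ⟨(1 - l).toNat, fun n hn => ?_⟩
  have h1 : Subsingleton (B ⟶ M⟦(-n : ℤ)⟧) := by
    by_contra h
    have := hl h
    omega
  have h2 : Subsingleton (B ⟶ (shiftEquiv C (n : ℤ)).inverse.obj M) := h1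
  exact ((shiftEquiv C (n : ℤ)).toAdjunction.homEquiv B M).subsingleton

/-- If `dim Hom(W, M) = dim Hom(W, N)` for all `W`, then all precomposition ranks agree: applied to
the cone of `φ`, the hypothesis shows that the ranks of `φ` agree as soon as those of `φ⟦1⟧` do, and
after enough shifts both vanish. -/
lemma preRank_eq_of_finrank_eq (hft : IsFiniteType C) {M N : C}
    (h : ∀ W : C, Module.finrank ℂ (W ⟶ M) = Module.finrank ℂ (W ⟶ N))
    {A B : C} (φ : A ⟶ B) : preRank φ M = preRank φ N := by
  have key : ∀ (k : ℕ) {A B : C} (φ : A ⟶ B),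
      (∀ n : ℕ, k ≤ n → Subsingleton (B⟦(n : ℤ)⟧ ⟶ M) ∧ Subsingleton (B⟦(n : ℤ)⟧ ⟶ N)) →
      preRank φ M = preRank φ N := by
    intro k
    induction k with
    | zero =>
      intro A B φ hB
      have aux : ∀ Z : C, Subsingleton (B⟦((0 : ℕ) : ℤ)⟧ ⟶ Z) → preRank φ Z = 0 := by
        intro Z hZ
        have : Subsingleton (B ⟶ Z) :=
          (Linear.homCongr ℂ ((shiftFunctorZero C ℤ).app B).symm (Iso.refl Z)).toEquiv.subsingleton
        have h0 : Linear.leftComp ℂ Z φ = 0 := by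
          ext x
          rw [Subsingleton.elim x 0, map_zero, map_zero]
        rw [preRank, h0, LinearMap.range_zero, finrank_bot]
      rw [aux M (hB 0 le_rfl).1, aux N (hB 0 le_rfl).2]
    | succ k ih =>
      intro A B φ hB
      have h1 := ih (φ⟦(1 : ℤ)⟧') (by
        intro n hn
        have aux : ∀ Z : C, Subsingleton (B⟦((n + 1 : ℕ) : ℤ)⟧ ⟶ Z) →
            Subsingleton (B⟦(1 : ℤ)⟧⟦(n : ℤ)⟧ ⟶ Z) := fun Z hZ =>
          (Linear.homCongr ℂ ((shiftFunctorAdd' C (1 : ℤ) (n : ℤ) ((n + 1 : ℕ) : ℤ)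
            (by push_cast; ring)).app B).symm (Iso.refl Z)).toEquiv.subsingleton
        exact ⟨aux M (hB (n + 1) (by omega)).1, aux N (hB (n + 1) (by omega)).2⟩)
      obtain ⟨D, p, q, hT⟩ := distinguished_cocone_triangle φ
      have aux (Z : C) : Module.finrank ℂ (D ⟶ Z) + preRank φ Z + preRank (φ⟦(1 : ℤ)⟧') Z =
          Module.finrank ℂ (B ⟶ Z) + Module.finrank ℂ (A⟦(1 : ℤ)⟧ ⟶ Z) :=
        finrank_hom_obj₃_add hft Z _ hT
      have h2 := aux M
      have h3 := aux N
      rw [h D, h B, h (A⟦(1 : ℤ)⟧)] at h2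
      omega
  obtain ⟨k₁, hk₁⟩ := hft.exists_subsingleton B M
  obtain ⟨k₂, hk₂⟩ := hft.exists_subsingleton B N
  exact key (max k₁ k₂) φ fun n hn =>
    ⟨hk₁ n (le_trans (le_max_left _ _) hn), hk₂ n (le_trans (le_max_right _ _) hn)⟩

lemma nonempty_iso_of_finrank_eq (hft : IsFiniteType C) {M N : C}
    (h : ∀ W : C, Module.finrank ℂ (W ⟶ M) = Module.finrank ℂ (W ⟶ N)) : Nonempty (M ≅ N) :=
  nonempty_iso_of_preRank_eq hft.finiteDimensional
    fun φ => preRank_eq_of_finrank_eq hft h φ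

/-- An object-level form of the octahedral axiom: if `K` is a fibre of `g`, then the cone of
`K ⟶ Y ⟶ cone f` is isomorphic to the cone of `f ≫ g`, because the two receive morphism spaces of
the same dimension from every object. -/
lemma exists_octahedral_triangle (hft : IsFiniteType C) {X Y Z K Cf Cgf : C}
    {f : X ⟶ Y} {p : Y ⟶ Cf} {p' : Cf ⟶ X⟦(1 : ℤ)⟧} (hf : Triangle.mk f p p' ∈ distTriang C)
    {k : K ⟶ Y} {g : Y ⟶ Z} {k' : Z ⟶ K⟦(1 : ℤ)⟧} (hg : Triangle.mk k g k' ∈ distTriang C)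
    {q : Z ⟶ Cgf} {q' : Cgf ⟶ X⟦(1 : ℤ)⟧} (hgf : Triangle.mk (f ≫ g) q q' ∈ distTriang C) :
    ∃ (a : Cf ⟶ Cgf) (b : Cgf ⟶ K⟦(1 : ℤ)⟧), Triangle.mk (k ≫ p) a b ∈ distTriang C := by
  have := hft.finiteDimensional
  obtain ⟨D, a, b, hD⟩ := distinguished_cocone_triangle (k ≫ p)
  obtain ⟨e⟩ : Nonempty (D ≅ Cgf) := by
    refine nonempty_iso_of_finrank_eq hft fun W => ?_
    have key : ∀ {A B D : C} {x : A ⟶ B} {y : B ⟶ D} {z : D ⟶ A⟦(1 : ℤ)⟧},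
        Triangle.mk x y z ∈ distTriang C →
        Module.finrank ℂ (W ⟶ D) + postRank W x + postRank W (x⟦(1 : ℤ)⟧') =
          Module.finrank ℂ (W ⟶ B) + Module.finrank ℂ (W ⟶ A⟦(1 : ℤ)⟧) :=
      fun h => finrank_obj₃_add hft W _ h
    have h1 := key hf
    have h2 := finrank_obj₃_add hft W _ (rot_of_distTriang _ hg)
    have h3 := key hgf
    have h4 := key hD
    have hcomp : ∀ {A B D : C} (x : A ⟶ B) (y : B ⟶ D), (Linear.rightComp ℂ W y) ∘ₗ
        (Linear.rightComp ℂ W x) = Linear.rightComp ℂ W (x ≫ y) := by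
      intros; ext; simp
    have h5 := finrank_range_comp_add (Linear.rightComp ℂ W f) (Linear.rightComp ℂ W p)
      (Linear.rightComp ℂ W k) (Linear.rightComp ℂ W g)
      (range_rightComp_mor₁ W (Triangle.mk f p p') hf)
      (range_rightComp_mor₁ W (Triangle.mk k g k') hg)
    have h6 := finrank_range_comp_add (Linear.rightComp ℂ W (f⟦(1 : ℤ)⟧'))
      (Linear.rightComp ℂ W (p⟦(1 : ℤ)⟧')) (Linear.rightComp ℂ W (k⟦(1 : ℤ)⟧'))
      (Linear.rightComp ℂ W (g⟦(1 : ℤ)⟧'))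
      (range_rightComp_shift W (Triangle.mk f p p') hf)
      (range_rightComp_shift W (Triangle.mk k g k') hg)
    rw [hcomp, hcomp] at h5 h6
    rw [Functor.map_comp] at h3 h4
    change Module.finrank ℂ (W ⟶ K⟦(1 : ℤ)⟧) + postRank W g + postRank W (g⟦(1 : ℤ)⟧') =
      Module.finrank ℂ (W ⟶ Z) + Module.finrank ℂ (W ⟶ Y⟦(1 : ℤ)⟧) at h2
    unfold postRank at h1 h2 h3 h4
    omega
  exact ⟨a ≫ e.hom, e.inv ≫ b, isomorphic_distinguished _ hD _
    (Triangle.isoMk _ _ (Iso.refl _) (Iso.refl _) e.symm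
      (by change (k ≫ p) ≫ 𝟙 _ = 𝟙 _ ≫ (k ≫ p); simp)
      (by change (a ≫ e.hom) ≫ e.inv = 𝟙 _ ≫ a; simp)
      (by change (e.inv ≫ b) ≫ (shiftFunctor C 1).map (𝟙 _) = e.inv ≫ b; simp))⟩

end Triangulated

/-! ### Extensions -/

section Extensions

variable {C : Type u} [Category.{v} C] [Preadditive C] [HasZeroObject C]
  [HasShift C ℤ] [∀ n : ℤ, (shiftFunctor C n).Additive] [Pretriangulated C]

/-- `Ext3 A X B`: up to isomorphism of the individual objects, there is a distinguished triangle
`A ⟶ X ⟶ B ⟶ A⟦1⟧`, i.e. `X` is an extension of `B` by `A`. -/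
def Ext3 (A X B : C) : Prop :=
  ∃ T ∈ distTriang C, Nonempty (T.obj₁ ≅ A) ∧ Nonempty (T.obj₂ ≅ X) ∧ Nonempty (T.obj₃ ≅ B)

lemma ext3_of_mem (T : Triangle C) (hT : T ∈ distTriang C) : Ext3 T.obj₁ T.obj₂ T.obj₃ :=
  ⟨T, hT, ⟨Iso.refl _⟩, ⟨Iso.refl _⟩, ⟨Iso.refl _⟩⟩

lemma Ext3.of_iso {A X B A' X' B' : C} (h : Ext3 A X B) (eA : A ≅ A') (eX : X ≅ X')
    (eB : B ≅ B') : Ext3 A' X' B' := by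
  obtain ⟨T, hT, ⟨e₁⟩, ⟨e₂⟩, ⟨e₃⟩⟩ := h
  exact ⟨T, hT, ⟨e₁ ≪≫ eA⟩, ⟨e₂ ≪≫ eX⟩, ⟨e₃ ≪≫ eB⟩⟩

lemma Ext3.exists_mk {A X B : C} (h : Ext3 A X B) :
    ∃ (f : A ⟶ X) (g : X ⟶ B) (h : B ⟶ A⟦(1 : ℤ)⟧), Triangle.mk f g h ∈ distTriang C := by
  obtain ⟨T, hT, ⟨e₁⟩, ⟨e₂⟩, ⟨e₃⟩⟩ := h
  refine ⟨e₁.inv ≫ T.mor₁ ≫ e₂.hom, e₂.inv ≫ T.mor₂ ≫ e₃.hom,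
    e₃.inv ≫ T.mor₃ ≫ e₁.hom⟦(1 : ℤ)⟧', isomorphic_distinguished _ hT _
      (Triangle.isoMk _ _ e₁.symm e₂.symm e₃.symm ?_ ?_ ?_)⟩
  · change (e₁.inv ≫ T.mor₁ ≫ e₂.hom) ≫ e₂.inv = e₁.inv ≫ T.mor₁
    simp
  · change (e₂.inv ≫ T.mor₂ ≫ e₃.hom) ≫ e₃.inv = e₂.inv ≫ T.mor₂
    simp
  · change (e₃.inv ≫ T.mor₃ ≫ e₁.hom⟦(1 : ℤ)⟧') ≫ e₁.inv⟦(1 : ℤ)⟧' = e₃.inv ≫ T.mor₃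
    simp only [Category.assoc, ← Functor.map_comp, Iso.hom_inv_id, CategoryTheory.Functor.map_id,
      Category.comp_id]

lemma Ext3.shift {A X B : C} (h : Ext3 A X B) (n : ℤ) : Ext3 (A⟦n⟧) (X⟦n⟧) (B⟦n⟧) := by
  obtain ⟨T, hT, ⟨e₁⟩, ⟨e₂⟩, ⟨e₃⟩⟩ := h
  exact ⟨_, Triangle.shift_distinguished T hT n, ⟨(shiftFunctor C n).mapIso e₁⟩,
    ⟨(shiftFunctor C n).mapIso e₂⟩, ⟨(shiftFunctor C n).mapIso e₃⟩⟩

lemma Ext3.map (F : C ⥤ C) [F.CommShift ℤ] [F.IsTriangulated] {A X B : C} (h : Ext3 A X B) :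
    Ext3 (F.obj A) (F.obj X) (F.obj B) := by
  obtain ⟨T, hT, ⟨e₁⟩, ⟨e₂⟩, ⟨e₃⟩⟩ := h
  exact ⟨_, F.map_distinguished T hT, ⟨F.mapIso e₁⟩, ⟨F.mapIso e₂⟩, ⟨F.mapIso e₃⟩⟩

lemma Ext3.rotate {A X B : C} (h : Ext3 A X B) : Ext3 X B (A⟦(1 : ℤ)⟧) := by
  obtain ⟨T, hT, ⟨e₁⟩, ⟨e₂⟩, ⟨e₃⟩⟩ := h
  exact ⟨_, rot_of_distTriang T hT, ⟨e₂⟩, ⟨e₃⟩, ⟨(shiftFunctor C (1 : ℤ)).mapIso e₁⟩⟩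

lemma Ext3.nonempty_iso {A X B : C} (h : Ext3 A X B) (hB : IsZero B) : Nonempty (A ≅ X) := by
  obtain ⟨T, hT, ⟨e₁⟩, ⟨e₂⟩, ⟨e₃⟩⟩ := h
  have : IsIso T.mor₁ := (T.isZero₃_iff_isIso₁ hT).1 (hB.of_iso e₃)
  exact ⟨e₁.symm ≪≫ asIso T.mor₁ ≪≫ e₂⟩

lemma ext3_biprod (A B : C) : Ext3 A (A ⊞ B) B :=
  ext3_of_mem _ (binaryBiproductTriangle_distinguished A B)

/-- The product over `Bool` is the binary biproduct. -/
noncomputable def piBoolIso (f : Bool → C) : ∏ᶜ f ≅ f true ⊞ f false where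
  hom := biprod.lift (Pi.π f true) (Pi.π f false)
  inv := Pi.lift fun b => match b with
    | true => biprod.fst
    | false => biprod.snd
  hom_inv_id := by
    apply Pi.hom_ext
    rintro (_ | _) <;> simp
  inv_hom_id := by ext <;> simp

lemma Ext3.biprod {A X B A' X' B' : C} (h : Ext3 A X B) (h' : Ext3 A' X' B') :
    Ext3 (A ⊞ A') (X ⊞ X') (B ⊞ B') := by
  obtain ⟨T, hT, ⟨e₁⟩, ⟨e₂⟩, ⟨e₃⟩⟩ := h
  obtain ⟨T', hT', ⟨e₁'⟩, ⟨e₂'⟩, ⟨e₃'⟩⟩ := h'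
  let S : Bool → Triangle C := fun b => match b with
    | true => T
    | false => T'
  refine ⟨_, productTriangle_distinguished S ?_,
    ⟨piBoolIso (fun j => (S j).obj₁) ≪≫ biprod.mapIso e₁ e₁'⟩,
    ⟨piBoolIso (fun j => (S j).obj₂) ≪≫ biprod.mapIso e₂ e₂'⟩,
    ⟨piBoolIso (fun j => (S j).obj₃) ≪≫ biprod.mapIso e₃ e₃'⟩⟩
  rintro (_ | _)
  · exact hT'
  · exact hT

/-- Extensions are associative, by the octahedral axiom at the level of objects. -/
lemma Ext3.exists_assoc [Linear ℂ C] (hft : IsFiniteType C) {A X Q B D : C} (h₁ : Ext3 A X Q)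
    (h₂ : Ext3 B Q D) : ∃ Y : C, Ext3 A Y B ∧ Ext3 Y X D := by
  obtain ⟨i, f, p, hf⟩ := h₁.exists_mk
  obtain ⟨k, g, k', hg⟩ := h₂.exists_mk
  obtain ⟨Cgf, q, q', hgf⟩ := distinguished_cocone_triangle (f ≫ g)
  have hf' : Triangle.mk f p (-(i⟦(1 : ℤ)⟧')) ∈ distTriang C := rot_of_distTriang _ hf
  obtain ⟨a, b, hD⟩ := exists_octahedral_triangle hft hf' hg hgf
  have unit : ∀ Z : C, Z⟦(1 : ℤ)⟧⟦(-1 : ℤ)⟧ ≅ Z := fun Z =>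
    (shiftFunctorCompIsoId C (1 : ℤ) (-1) (by norm_num)).app Z
  exact ⟨Cgf⟦(-1 : ℤ)⟧,
    ((ext3_of_mem _ hD).rotate.shift (-1)).of_iso (unit A) (Iso.refl _) (unit B),
    ext3_of_mem _ (inv_rot_of_distTriang _ hgf)⟩

end Extensions

/-! ### Towers -/

section Towers

variable {C : Type u} [Category.{v} C] [Preadditive C] [HasZeroObject C]
  [HasShift C ℤ] [∀ n : ℤ, (shiftFunctor C n).Additive] [Pretriangulated C]

open scoped ZeroObject

/-- An additive functor commutes with binary biproducts. -/
noncomputable def mapBiprodIso (F : C ⥤ C) [F.Additive] (X Y : C) :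
    F.obj (X ⊞ Y) ≅ F.obj X ⊞ F.obj Y :=
  have := preservesBinaryBiproduct_of_preservesBiproduct F X Y
  F.mapBiprod X Y

/-- The cost `exp(n t)` of attaching a copy of the building block shifted by `n`. -/
noncomputable def wt (t : ℝ) (n : ℤ) : ℝ≥0∞ := ENNReal.ofReal (Real.exp ((n : ℝ) * t))

lemma wt_add (t : ℝ) (a b : ℤ) : wt t (a + b) = wt t a * wt t b := by
  rw [wt, wt, wt, ← ENNReal.ofReal_mul (Real.exp_pos _).le, ← Real.exp_add]
  push_cast
  rw [add_mul]

lemma wt_ne_top (t : ℝ) (n : ℤ) : wt t n ≠ ⊤ := ENNReal.ofReal_ne_top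

/-- `Built t M c X`: the object `X` is obtained from zero by finitely many extensions by shifts of
`M`, with total cost `c`. -/
inductive Built (t : ℝ) (M : C) : ℝ≥0∞ → C → Prop
  | zero {X : C} (hX : IsZero X) : Built t M 0 X
  | step {c : ℝ≥0∞} {A X : C} (n : ℤ) (hA : Built t M c A) (h : Ext3 A X (M⟦n⟧)) :
      Built t M (c + wt t n) X

lemma Built.of_iso {t : ℝ} {M : C} {c : ℝ≥0∞} {X Y : C} (h : Built t M c X) (e : X ≅ Y) :
    Built t M c Y := by
  cases h with
  | zero hX => exact .zero (hX.of_iso e.symm)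
  | step n hA h => exact .step n hA (h.of_iso (Iso.refl _) e (Iso.refl _))

lemma Built.ne_top {t : ℝ} {M : C} {c : ℝ≥0∞} {X : C} (h : Built t M c X) : c ≠ ⊤ := by
  induction h with
  | zero => simp
  | step n _ _ ih => exact ENNReal.add_ne_top.2 ⟨ih, wt_ne_top t n⟩

/-- Costs add up in extensions: by associativity, the steps of a tower for the quotient `Z` can be
performed on top of a tower for the subobject `X`. -/
lemma Built.ext [Linear ℂ C] (hft : IsFiniteType C) {t : ℝ} {M : C} {c d : ℝ≥0∞} {X Y Z : C}
    (hX : Built t M c X) (hZ : Built t M d Z) (h : Ext3 X Y Z) : Built t M (c + d) Y := by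
  induction hZ generalizing Y with
  | zero hZ =>
    obtain ⟨e⟩ := h.nonempty_iso hZ
    rw [add_zero]
    exact hX.of_iso e
  | step n _ hn ih =>
    obtain ⟨Y', h₁, h₂⟩ := h.exists_assoc hft hn
    rw [← add_assoc]
    exact .step n (ih h₁) h₂

lemma Built.shift {t : ℝ} {M : C} {c : ℝ≥0∞} {X : C} (h : Built t M c X) (k : ℤ) :
    Built t M (c * wt t k) (X⟦k⟧) := by
  induction h with
  | zero hX =>
    rw [zero_mul]
    exact .zero ((shiftFunctor C k).map_isZero hX)
  | step n _ hn ih =>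
    rw [add_mul, ← wt_add]
    exact .step _ ih ((hn.shift k).of_iso (Iso.refl _) (Iso.refl _)
      ((shiftFunctorAdd C n k).app M).symm)

lemma Built.map (F : C ⥤ C) [F.CommShift ℤ] [F.IsTriangulated] {t : ℝ} {M : C} {c : ℝ≥0∞} {X : C}
    (h : Built t M c X) : Built t (F.obj M) c (F.obj X) := by
  induction h with
  | zero hX => exact .zero (F.map_isZero hX)
  | step n _ hn ih =>
    exact .step n ih ((hn.map F).of_iso (Iso.refl _) (Iso.refl _) ((F.commShiftIso n).app M))

lemma built_self (t : ℝ) (M : C) : Built t M (wt t 0) M := by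
  have h := Built.step (t := t) (M := M) 0 (.zero (isZero_zero C)) (ext3_biprod 0 (M⟦(0 : ℤ)⟧))
  rw [zero_add] at h
  refine h.of_iso ?_
  exact ((isoBiprodZero (X := M⟦(0 : ℤ)⟧) (isZero_zero C)) ≪≫ biprod.braiding _ _).symm ≪≫
    (shiftFunctorZero C ℤ).app M

/-- Substitution of towers: a tower for `B`, up to a summand, can be inserted for each copy of `B`
in a tower for `X`. -/
lemma Built.subst [Linear ℂ C] (hft : IsFiniteType C) {t : ℝ} {G B B₀ : C} {c d : ℝ≥0∞} {X : C}
    (hB : Built t G c (B ⊞ B₀)) (hX : Built t B d X) : ∃ X' : C, Built t G (d * c) (X ⊞ X') := by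
  induction hX with
  | zero hX =>
    refine ⟨0, ?_⟩
    rw [zero_mul]
    exact .zero (hX.of_iso (isoBiprodZero (isZero_zero C)).symm)
  | @step d A X n _ hn ih =>
    obtain ⟨A', hA'⟩ := ih
    refine ⟨A' ⊞ B₀⟦n⟧, ?_⟩
    rw [add_mul, mul_comm (wt t n)]
    exact hA'.ext hft ((hB.shift n).of_iso (mapBiprodIso (shiftFunctor C n) B B₀))
      (hn.biprod (ext3_biprod A' (B₀⟦n⟧)))

/-- The objects that can be built up to a direct summand form a thick subcategory. -/
lemma isThick_built [Linear ℂ C] (hft : IsFiniteType C) (t : ℝ) (G : C) :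
    IsThick C {X : C | ∃ (c : ℝ≥0∞) (X' : C), Built t G c (X ⊞ X')} where
  mem_of_iso := by
    rintro X Y e ⟨c, X', h⟩
    exact ⟨c, X', h.of_iso (biprod.mapIso e (Iso.refl _))⟩
  shift_mem := by
    rintro X n ⟨c, X', h⟩
    exact ⟨_, _, (h.shift n).of_iso (mapBiprodIso (shiftFunctor C n) X X')⟩
  cone_mem := by
    rintro T hT ⟨c, X', h⟩ ⟨d, Y', h'⟩
    exact ⟨_, _, h'.ext hft ((h.shift 1).of_iso (mapBiprodIso (shiftFunctor C (1 : ℤ)) _ _))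
      ((ext3_of_mem T hT).rotate.biprod (ext3_biprod Y' (X'⟦(1 : ℤ)⟧)))⟩
  summand_mem := by
    rintro X Y ⟨c, X', h⟩
    exact ⟨c, _, h.of_iso (biprod.associator X Y X')⟩

lemma exists_built [Linear ℂ C] (hft : IsFiniteType C) (t : ℝ) {G X : C}
    (hX : X ∈ thickClosure C G) : ∃ (c : ℝ≥0∞) (X' : C), Built t G c (X ⊞ X') :=
  hX _ ⟨isThick_built hft t G, _, _, (built_self t G).of_iso (isoBiprodZero (isZero_zero C))⟩

/-! ### Towers and complexity -/

lemma built_of_tower (t : ℝ) (M : C) (p : ℕ) (n : Fin p → ℤ) (A : Fin (p + 1) → C)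
    (h0 : IsZero (A 0)) (h : ∀ i : Fin p, Ext3 (A i.castSucc) (A i.succ) (M⟦n i⟧)) :
    Built t M (∑ i, wt t (n i)) (A (Fin.last p)) := by
  induction p with
  | zero => simpa using Built.zero h0
  | succ p ih =>
    rw [Fin.sum_univ_castSucc]
    have h1 := ih (fun i => n i.castSucc) (fun i => A i.castSucc) h0 (fun i => h i.castSucc)
    exact .step _ h1 (h (Fin.last p))

lemma Built.exists_tower {t : ℝ} {M : C} {c : ℝ≥0∞} {X : C} (hX : Built t M c X) :
    ∃ (p : ℕ) (n : Fin p → ℤ) (A : Fin (p + 1) → C), IsZero (A 0) ∧ A (Fin.last p) = X ∧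
      (∀ i : Fin p, Ext3 (A i.castSucc) (A i.succ) (M⟦n i⟧)) ∧ c = ∑ i, wt t (n i) := by
  induction hX with
  | @zero X hX => exact ⟨0, Fin.elim0, fun _ => X, hX, rfl, fun i => i.elim0, by simp⟩
  | @step c B X k _ hk ih =>
    obtain ⟨p, n, A, h0, rfl, h, rfl⟩ := ih
    refine ⟨p + 1, Fin.snoc (α := fun _ => ℤ) n k, Fin.snoc (α := fun _ => C) A X, ?_, ?_, ?_, ?_⟩
    · rw [← Fin.castSucc_zero, Fin.snoc_castSucc]
      exact h0
    · rw [Fin.snoc_last]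
    · intro i
      induction i using Fin.lastCases with
      | last =>
        rw [Fin.succ_last, Fin.snoc_last, Fin.snoc_last, Fin.snoc_castSucc]
        exact hk
      | cast i =>
        rw [Fin.succ_castSucc, Fin.snoc_castSucc, Fin.snoc_castSucc, Fin.snoc_castSucc]
        exact h i
    · rw [Fin.sum_univ_castSucc]
      simp

lemma complexity_le {t : ℝ} {M N N' : C} {c : ℝ≥0∞} (hN : N ∈ thickClosure C M)
    (h : Built t M c (N ⊞ N')) : complexity C t M N ≤ c := by
  unfold complexity
  split_ifs with h0
  · exact zero_le
  apply sInf_le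
  obtain ⟨p, n, A, hA0, hAp, hA, hc⟩ := h.exists_tower
  refine ⟨p, ?_, n, A, N', hA0, ⟨eqToIso hAp⟩, fun i => (hA i).exists_mk, hc⟩
  -- a tower of length zero would make the nonzero object `N` a summand of zero
  rcases Nat.eq_zero_or_pos p with rfl | hp
  · refine absurd ?_ h0
    have hz : IsZero (N ⊞ N') := hAp ▸ hA0
    rw [IsZero.iff_id_eq_zero, ← biprod.inl_fst (X := N) (Y := N'), hz.eq_of_tgt biprod.inl 0,
      zero_comp]
  · exact hp

lemma exists_built_of_complexity_lt {t : ℝ} {M N : C} {b : ℝ≥0∞} (h0 : ¬ IsZero N)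
    (h : complexity C t M N < b) : ∃ c < b, ∃ N' : C, Built t M c (N ⊞ N') := by
  unfold complexity at h
  rw [if_neg h0] at h
  split_ifs at h with hN
  · obtain ⟨c, ⟨p, -, n, A, N', hA0, ⟨e⟩, hA, rfl⟩, hlt⟩ := sInf_lt_iff.1 h
    refine ⟨_, hlt, N', (built_of_tower t M p n A hA0 fun i => ?_).of_iso e⟩
    obtain ⟨f, g, k, hT⟩ := hA i
    exact ext3_of_mem _ hT
  · exact absurd h not_top_lt

/-- Applying `F` once increases the complexity with respect to `G` at most by a fixed factor: apply
`F` to a tower with blocks `G` and substitute a tower for `F G`. -/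
lemma exists_complexity_map_le [Linear ℂ C] (hft : IsFiniteType C) (t : ℝ) (G : C)
    (hG : IsSplitGenerator C G) (F : C ⥤ C) [F.Additive] [F.CommShift ℤ] [F.IsTriangulated] :
    ∃ K : ℝ≥0∞, K ≠ ⊤ ∧ ∀ N : C, ¬ IsZero N →
      complexity C t G (F.obj N) ≤ complexity C t G N * K := by
  obtain ⟨K, B₀, hK⟩ := exists_built hft t (hG (F.obj G))
  refine ⟨K, hK.ne_top, fun N hN => ?_⟩
  have key : ∀ b, complexity C t G N < b → complexity C t G (F.obj N) ≤ b * K := by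
    intro b hb
    obtain ⟨c, hcb, N', hc⟩ := exists_built_of_complexity_lt hN hb
    obtain ⟨X', hX'⟩ := Built.subst hft hK ((hc.map F).of_iso (mapBiprodIso F N N'))
    exact (complexity_le (hG _) (hX'.of_iso (biprod.associator _ _ _))).trans
      (mul_le_mul_left hcb.le _)
  obtain ⟨c₀, N₀, hN₀⟩ := exists_built hft t (hG N)
  have hfin : complexity C t G N ≠ ⊤ :=
    ne_top_of_le_ne_top hN₀.ne_top (complexity_le (hG N) hN₀)
  by_contra! hlt
  obtain ⟨b, hb, hb'⟩ :=
    exists_between ((ENNReal.lt_div_iff_mul_lt (.inr hfin) (.inl hK.ne_top)).2 hlt)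
  exact absurd (key b hb) (not_le.2 (ENNReal.mul_lt_of_lt_div hb'))

end Towers

/-! ### Growth rates -/

/-- If `a` grows at most by a fixed factor in each step, the exponential growth rate of the
subsequence `a (m * n)` is `m` times that of `a`. -/
lemma limsup_log_mul (a : ℕ → ℝ≥0∞) (K : ℝ≥0∞) (hK : K ≠ ⊤) (ha : ∀ n, a (n + 1) ≤ a n * K)
    (m : ℕ) (hm : 1 ≤ m) :
    Filter.atTop.limsup (fun n : ℕ => (((n : ℝ)⁻¹ : ℝ) : EReal) * (a (m * n)).log) =
      (((m : ℝ)) : EReal) *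
        Filter.atTop.limsup (fun n : ℕ => (((n : ℝ)⁻¹ : ℝ) : EReal) * (a n).log) := by
  -- `k` is chosen nonnegative so that `r * k ≤ m * k` for the remainders `r` below
  obtain ⟨k, hk0, hk⟩ : ∃ k : ℝ, 0 ≤ k ∧ K.log ≤ (k : EReal) := by
    refine ⟨max 0 K.log.toReal, le_max_left _ _, ?_⟩
    have h1 : K.log ≤ (K.log.toReal : EReal) := EReal.le_coe_toReal (by simpa using hK)
    exact h1.trans (EReal.coe_le_coe_iff.2 (le_max_right _ _))
  have hstep : ∀ n, (a (n + 1)).log ≤ (a n).log + (k : EReal) := by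
    intro n
    calc (a (n + 1)).log ≤ (a n * K).log := ENNReal.log_monotone (ha n)
      _ = (a n).log + K.log := ENNReal.log_mul_add
      _ ≤ _ := by gcongr
  have hiter : ∀ n r : ℕ, (a (n + r)).log ≤ (a n).log + ((r * k : ℝ) : EReal) := by
    intro n r
    induction r with
    | zero => simp
    | succ r ih =>
      calc (a (n + r + 1)).log ≤ (a (n + r)).log + (k : EReal) := hstep _
        _ ≤ ((a n).log + ((r * k : ℝ) : EReal)) + (k : EReal) := by gcongr
        _ = _ := by
          rw [add_assoc, ← EReal.coe_add]
          congr 2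
          push_cast
          ring
  have hm0 : (0 : ℝ) < m := by exact_mod_cast hm
  have hdiv : ∀ (n : ℕ) (x : EReal) (c : ℝ), 0 < n →
      ((((n : ℝ)⁻¹ : ℝ) : EReal) * x ≤ (c : EReal) ↔ x ≤ ((c * n : ℝ) : EReal)) := by
    intro n x c hn
    have hn' : (0 : ℝ) < n := by exact_mod_cast hn
    induction x with
    | bot => simp [EReal.coe_mul_bot_of_pos (inv_pos.2 hn')]
    | top =>
      rw [EReal.coe_mul_top_of_pos (inv_pos.2 hn')]
      simp only [top_le_iff, EReal.coe_ne_top]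
    | coe x =>
      rw [← EReal.coe_mul, EReal.coe_le_coe_iff, EReal.coe_le_coe_iff, inv_mul_le_iff₀ hn',
        mul_comm]
  have hscale : ∀ (x : EReal) (c : ℝ), ((m : ℝ) : EReal) * x < (c : EReal) ↔
      x < ((c / m : ℝ) : EReal) := by
    intro x c
    induction x with
    | bot => simp only [EReal.coe_mul_bot_of_pos hm0, EReal.bot_lt_coe]
    | top => simp only [EReal.coe_mul_top_of_pos hm0, not_top_lt]
    | coe x =>
      rw [← EReal.coe_mul, EReal.coe_lt_coe_iff, EReal.coe_lt_coe_iff, lt_div_iff₀ hm0, mul_comm]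
  apply le_antisymm
  · refine EReal.le_of_forall_lt_iff_le.1 fun c hc => ?_
    rw [hscale] at hc
    have h1 := Filter.eventually_lt_of_limsup_lt hc
    have htend : Tendsto (fun n : ℕ => m * n) atTop atTop :=
      tendsto_id.const_mul_atTop' (by omega)
    refine Filter.limsup_le_of_le (h := ?_)
    filter_upwards [htend.eventually h1, eventually_gt_atTop 0] with n hn hn0
    have h2 := (hdiv (m * n) _ _ (by positivity)).1 hn.le
    rw [hdiv n _ _ hn0]
    convert h2 using 2
    push_cast
    field_simp
  · refine EReal.le_of_forall_lt_iff_le.1 fun c hc => ?_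
    -- real numbers strictly between the growth rate of the subsequence and `c`
    obtain ⟨c₁, hc₁, hc₁c⟩ := EReal.lt_iff_exists_real_btwn.1 hc
    obtain ⟨c₂, hc₂, hc₂c⟩ := EReal.lt_iff_exists_real_btwn.1 hc₁c
    have hcc : c₁ < c₂ := by exact_mod_cast hc₂
    obtain ⟨Q, hQ⟩ := eventually_atTop.1 (Filter.eventually_lt_of_limsup_lt hc₁)
    have hle : Filter.atTop.limsup (fun n : ℕ => (((n : ℝ)⁻¹ : ℝ) : EReal) * (a n).log) ≤
        ((c₂ / m : ℝ) : EReal) := by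
      refine Filter.limsup_le_of_le (h := ?_)
      obtain ⟨N, hN⟩ := exists_nat_ge (m * (|c₁| + m * k) / (c₂ - c₁))
      filter_upwards [eventually_ge_atTop (m * (Q + 1)), eventually_ge_atTop N] with n hn hnN
      have hn0 : 0 < n := lt_of_lt_of_le (by positivity) hn
      rw [hdiv n _ _ hn0]
      have hq : Q + 1 ≤ n / m := (Nat.le_div_iff_mul_le (by omega)).2 (by rwa [mul_comm])
      have h1 := (hdiv (n / m) _ _ (by omega)).1 (hQ (n / m) (by omega)).le
      have h2 := hiter (m * (n / m)) (n % m)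
      rw [Nat.div_add_mod] at h2
      refine h2.trans ((add_le_add_left h1 _).trans ?_)
      rw [← EReal.coe_add, EReal.coe_le_coe_iff]
      have hn1 : ((m : ℝ) * (n / m : ℕ) + (n % m : ℕ)) = n := by exact_mod_cast Nat.div_add_mod n m
      have hr : ((n % m : ℕ) : ℝ) ≤ m := by exact_mod_cast (Nat.mod_lt n (by omega)).le
      have hr0 : (0 : ℝ) ≤ (n % m : ℕ) := by positivity
      generalize ((n / m : ℕ) : ℝ) = q at *
      generalize ((n % m : ℕ) : ℝ) = r at *
      have h3 : m * (|c₁| + m * k) ≤ (c₂ - c₁) * n := by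
        have : m * (|c₁| + m * k) / (c₂ - c₁) ≤ (n : ℝ) := hN.trans (by exact_mod_cast hnN)
        rwa [div_le_iff₀' (by linarith)] at this
      have h4 : r * k ≤ m * k := by gcongr
      have h5 : -(c₁ * r) ≤ m * |c₁| := by
        calc -(c₁ * r) = (-c₁) * r := by ring
          _ ≤ |c₁| * r := by gcongr; exact neg_le_abs c₁
          _ ≤ |c₁| * m := by gcongr
          _ = _ := mul_comm _ _
      rw [div_mul_eq_mul_div, le_div_iff₀ hm0]
      have h6 : r * k * m ≤ m * k * m := by gcongr
      rw [← hn1] at h3 ⊢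
      nlinarith
    exact ((hscale _ _).2 (hle.trans_lt (EReal.coe_lt_coe_iff.2
      (div_lt_div_of_pos_right (by exact_mod_cast hc₂c) hm0)))).le

lemma iter_add_obj {C : Type u} [Category.{v} C] (F : C ⥤ C) (a b : ℕ) (X : C) :
    (iter C F (a + b)).obj X = (iter C F b).obj ((iter C F a).obj X) := by
  induction b with
  | zero => rfl
  | succ b ih => exact congrArg F.obj ih

lemma iter_iter_obj {C : Type u} [Category.{v} C] (F : C ⥤ C) (m n : ℕ) (X : C) :
    (iter C (iter C F m) n).obj X = (iter C F (m * n)).obj X := by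
  induction n with
  | zero => rfl
  | succ n ih =>
    rw [Nat.mul_succ, iter_add_obj F (m * n) m, ← ih]
    rfl

/-- `h_t(F^m) = m · h_t(F)` for `m ≥ 1`. -/
theorem statement_9 {C : Type u} [Category.{v} C] [Preadditive C] [HasZeroObject C]
    [HasShift C ℤ] [∀ n : ℤ, (shiftFunctor C n).Additive] [Pretriangulated C] [Linear ℂ C]
    (hC : ∃ X : C, ¬ IsZero X) (hft : IsFiniteType C)
    (G : C) (hG : IsSplitGenerator C G)
    (F : C ⥤ C) [F.Additive] [F.Linear ℂ] [F.CommShift ℤ] [F.IsTriangulated]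
    (hF : ∀ n : ℕ, ¬ IsZero ((iter C F n).obj G))
    (m : ℕ) (hm : 1 ≤ m) (t : ℝ) :
    entropy C (iter C F m) G t = (((m : ℝ)) : EReal) * entropy C F G t := by
  obtain ⟨K, hK, hle⟩ := exists_complexity_map_le hft t G hG F
  unfold entropy
  simp only [iter_iter_obj]
  exact limsup_log_mul (fun n => complexity C t G ((iter C F n).obj G)) K hK
    (fun n => hle _ (hF n)) m hm

end CatEntropy
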